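/- For every connected graph G with maximum degree Δ(G) ≥ 1, h(G) ≥ ⌊√(Δ(G))⌋. In particular, if G has n vertices and e edges, then h(G) ≥ ⌊√(2e/n)⌋. -/

import Mathlib

open Finset

/-- The multiset of pairwise distances between distinct vertices of `S` in `G`
(one entry for each unordered pair of distinct vertices of `S`). -/
noncomputable def distMultiset {V : Type*} (G : SimpleGraph V) (S : Finset V) : Multiset ℕ :=
  letI := Classical.decEq V
  (S.sym2.filter fun p => ¬ p.IsDiag).val.map
    (Sym2.lift ⟨fun a b => G.dist a b, fun _ _ => SimpleGraph.dist_comm⟩)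

/-- Two disjoint vertex sets are homometric if their distance multisets coincide. -/
def Homometric {V : Type*} (G : SimpleGraph V) (S₁ S₂ : Finset V) : Prop :=
  Disjoint S₁ S₂ ∧ distMultiset G S₁ = distMultiset G S₂

/-- `h(G)`: the largest `h` such that `G` contains two disjoint homometric sets of
size `h` each. -/
noncomputable def homNumber {V : Type*} (G : SimpleGraph V) : ℕ :=
  sSup {h : ℕ | ∃ S₁ S₂ : Finset V, Homometric G S₁ S₂ ∧ S₁.card = h ∧ S₂.card = h}


/-- Indicator (mod 2) that the parities in `l` alternate, starting with even iff `b`. -/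
def altInd : Bool → List ℕ → ZMod 2
  | _, [] => 1
  | b, x :: l => if (decide (x % 2 = 0)) = b then altInd (!b) l else 0

theorem zmod2_add_self (x : ZMod 2) : x + x = 0 := CharTwo.add_self_eq_zero x

theorem altInd_list (l : List ℕ) (hl : l.Pairwise (· ≤ ·)) (b : Bool) :
    (l.map (fun x => altInd b (l.erase x))).sum = altInd b l + altInd (!b) l := by
  induction l generalizing b with
  | nil => simp [altInd]; decide
  | cons y l ih =>
    rw [List.pairwise_cons] at hl
    have h1 : l.map (fun x => altInd b ((y :: l).erase x)) =
        l.map (fun x => altInd b (y :: l.erase x)) := by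
      apply List.map_congr_left
      intro x hx
      congr 1
      by_cases hxy : x = y
      · subst hxy
        cases l with
        | nil => simp at hx
        | cons z l =>
          have hz : z = x := by
            have h2 := hl.1 z (by simp)
            have h3 := hl.2
            rw [List.pairwise_cons] at h3
            rcases List.mem_cons.1 hx with h | h
            · exact h.symm
            · exact le_antisymm (h3.1 x h) h2
          subst hz
          simp
      · rw [List.erase_cons_tail]
        simpa using fun h => hxy h.symm
    rw [List.map_cons, List.sum_cons, h1, List.erase_cons_head]
    by_cases hb : (decide (y % 2 = 0)) = b
    · have h2 : (fun x => altInd b (y :: l.erase x)) = fun x => altInd (!b) (l.erase x) := by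
        funext x; simp [altInd, hb]
      have hb' : ¬ ((decide (y % 2 = 0)) = !b) := by rw [hb]; cases b <;> simp
      rw [h2, ih hl.2]
      simp only [altInd, hb, hb', if_true, if_false, Bool.not_not]
      have h4 : ¬ (b = !b) := by cases b <;> simp
      rw [if_neg h4]
      have := zmod2_add_self (altInd b l)
      linear_combination this
    · have h2 : (fun x => altInd b (y :: l.erase x)) = fun x => 0 := by
        funext x; simp [altInd, hb]
      have hb' : ((decide (y % 2 = 0)) = !b) := by
        revert hb; cases b <;> cases (decide (y % 2 = 0)) <;> simp
      rw [h2]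
      simp only [altInd, hb, hb', if_true, if_false, Bool.not_not]
      have h4 : ¬ ((!b) = b) := by cases b <;> simp
      rw [if_neg h4]
      simp

theorem altInd_multiset (M : Multiset ℕ) (b : Bool) :
    (M.map (fun x => altInd b ((M.erase x).sort))).sum
      = altInd b M.sort + altInd (!b) M.sort := by
  have hs : (M.sort).Pairwise (· ≤ ·) := Multiset.pairwise_sort M (· ≤ ·)
  rw [← altInd_list _ hs]
  have hM : ((M.sort : List ℕ) : Multiset ℕ) = M := Multiset.sort_eq M (· ≤ ·)
  generalize M.sort = l at hs hM
  subst hM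
  rw [Multiset.map_coe, Multiset.sum_coe]
  congr 1
  apply List.map_congr_left
  intro x _
  congr 1
  rw [Multiset.coe_erase]
  refine List.Perm.eq_of_pairwise' (r := (· ≤ ·)) (Multiset.pairwise_sort _ _) (hs.sublist List.erase_sublist) ?_
  exact Multiset.coe_eq_coe.1 (Multiset.sort_eq _ _)

theorem altInd_finset {ι : Type*} [DecidableEq ι] (T : Finset ι) (L : ι → ℕ) (b : Bool) :
    ∑ i ∈ T, altInd b (((T.erase i).val.map L).sort)
      = altInd b (T.val.map L).sort + altInd (!b) (T.val.map L).sort := by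
  rw [← altInd_multiset, Multiset.map_map, Finset.sum]
  congr 1
  apply Multiset.map_congr rfl
  intro i hi
  simp only [Function.comp]
  rw [Finset.erase_val, Multiset.map_erase_of_mem _ _ hi]

/-- Antipodal label. -/
def flipLab (x : ℕ) : ℕ := x + 1 - 2 * (x % 2)

theorem altInd_map_flip (l : List ℕ) (b : Bool) :
    altInd b (l.map flipLab) = altInd (!b) l := by
  induction l generalizing b with
  | nil => simp [altInd]
  | cons x l ih =>
    simp only [List.map_cons, altInd, ih]
    have : (decide (flipLab x % 2 = 0)) = !(decide (x % 2 = 0)) := by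
      unfold flipLab
      by_cases h : x % 2 = 0
      · have : ¬ ((x + 1 - 2 * (x % 2)) % 2 = 0) := by omega
        simp [h]; omega
      · have : ((x + 1 - 2 * (x % 2)) % 2 = 0) := by omega
        simp [h, this]
    rw [this]
    cases b <;> cases (decide (x % 2 = 0)) <;> simp

theorem altInd_flip (M : Multiset ℕ) (b : Bool)
    (hM : ∀ x ∈ M, ∀ y ∈ M, x / 2 = y / 2 → x = y) :
    altInd b (M.map flipLab).sort = altInd (!b) M.sort := by
  rw [← altInd_map_flip]
  congr 1
  refine (Multiset.map_sort (r := (· ≤ ·)) (r' := (· ≤ ·)) (f := flipLab) (s := M) ?_).symm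
  intro x hx y hy
  have h1 := hM x hx y hy
  unfold flipLab
  constructor <;> intro h <;> by_cases h2 : x / 2 = y / 2
  · rw [h1 h2]
  · omega
  · rw [h1 h2]
  · omega

theorem altInd_sorted (l : List ℕ) (b : Bool) (h : altInd b l ≠ 0) (hl : l.Pairwise (· ≤ ·))
    (hM : ∀ x ∈ l, ∀ y ∈ l, x / 2 = y / 2 → x = y) : l.IsChain (fun x y => x / 2 < y / 2) := by
  induction l generalizing b with
  | nil => simp
  | cons x l ih =>
    have hx : altInd (!b) l ≠ 0 ∧ decide (x % 2 = 0) = b := by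
      unfold altInd at h
      split_ifs at h with h1
      · exact ⟨h, h1⟩
      · exact absurd rfl h
    rw [List.pairwise_cons] at hl
    have ih' := ih _ hx.1 hl.2 (fun x hx y hy => hM x (by simp [hx]) y (by simp [hy]))
    cases l with
    | nil => simp
    | cons y l =>
      rw [List.isChain_cons_cons]
      refine ⟨?_, ih'⟩
      have h1 := hl.1 y (by simp)
      have h2 := hM x (by simp) y (by simp)
      by_contra hc
      have h3 : x = y := h2 (by omega)
      have h4 := hx.1
      unfold altInd at h4
      rw [← h3, hx.2] at h4
      revert h4
      cases b <;> simp

theorem altInd_bound (M : Multiset ℕ) (b : Bool) (m : ℕ) (h : altInd b M.sort ≠ 0)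
    (hM : ∀ x ∈ M, ∀ y ∈ M, x / 2 = y / 2 → x = y) (hb : ∀ x ∈ M, x < 2 * m) :
    M.card ≤ m := by
  have hmem : ∀ x, x ∈ M.sort ↔ x ∈ M := fun x => Multiset.mem_sort (s := M) (r := (· ≤ ·))
  have h1 := altInd_sorted _ b h (Multiset.pairwise_sort M (· ≤ ·))
    (fun x hx y hy => hM x ((hmem x).1 hx) y ((hmem y).1 hy))
  have h2 : ((M.sort).map (fun x => x / 2)).Nodup := by
    have h3 : ((M.sort).map (fun x => x / 2)).IsChain (· < ·) := by
      rw [List.isChain_map]; exact h1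
    exact (List.isChain_iff_pairwise.1 h3).imp (fun h => ne_of_lt h)
  have h3 : ((M.sort).map (fun x => x / 2)).toFinset ⊆ Finset.range m := by
    intro x hx
    simp only [List.mem_toFinset, List.mem_map] at hx
    obtain ⟨y, hy, rfl⟩ := hx
    have := hb y ((hmem y).1 hy)
    simp; omega
  have h4 := Finset.card_le_card h3
  rw [List.toFinset_card_of_nodup h2, List.length_map, Finset.card_range] at h4
  rwa [Multiset.length_sort] at h4

/-- Elements of sign `b` among those at position `≤ i` in the signed permutation `w`. -/
def sgnPart {n : ℕ} (w : Equiv.Perm (Fin n) × (Fin n → Bool)) (b : Bool) (i : Fin n) :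
    Finset (Fin n) :=
  univ.filter (fun c => w.1 c ≤ i ∧ w.2 c = b)

theorem mem_sgnPart {n : ℕ} (w : Equiv.Perm (Fin n) × (Fin n → Bool)) (b : Bool) (i c : Fin n) :
    c ∈ sgnPart w b i ↔ w.1 c ≤ i ∧ w.2 c = b := by
  simp [sgnPart]

def labAt {n : ℕ} (lab : Finset (Fin n) → Finset (Fin n) → ℕ)
    (w : Equiv.Perm (Fin n) × (Fin n → Bool)) (i : Fin n) : ℕ :=
  lab (sgnPart w true i) (sgnPart w false i)

/-- Positions below `d`. -/
def lowPos (n d : ℕ) : Finset (Fin n) := univ.filter (fun i => i.val < d)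

/-- Facets of the `d`-dimensional octahedral sphere. -/
def facets (n d : ℕ) : Finset (Equiv.Perm (Fin n) × (Fin n → Bool)) :=
  univ.filter (fun w => ∀ c : Fin n, d ≤ c.val → w.1 c = c ∧ w.2 c = true)

structure GoodLab {n : ℕ} (lab : Finset (Fin n) → Finset (Fin n) → ℕ) : Prop where
  anti : ∀ P Q, Disjoint P Q → (P ∪ Q).Nonempty → lab Q P = flipLab (lab P Q)
  comp : ∀ P Q P' Q', P ⊆ P' → Q ⊆ Q' → Disjoint P' Q' → (P ∪ Q).Nonempty →
    lab P Q / 2 = lab P' Q' / 2 → lab P Q = lab P' Q'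

theorem sgnPart_disj {n : ℕ} (w : Equiv.Perm (Fin n) × (Fin n → Bool)) (i : Fin n) :
    Disjoint (sgnPart w true i) (sgnPart w false i) := by
  rw [Finset.disjoint_left]
  intro c h1 h2
  simp only [sgnPart, mem_filter] at h1 h2
  rw [h1.2.2] at h2
  simp at h2

theorem sgnPart_nonempty {n : ℕ} (w : Equiv.Perm (Fin n) × (Fin n → Bool)) (i : Fin n) :
    (sgnPart w true i ∪ sgnPart w false i).Nonempty := by
  refine ⟨w.1.symm i, ?_⟩
  simp only [sgnPart, mem_union, mem_filter, mem_univ, true_and, Equiv.apply_symm_apply, le_refl]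
  cases w.2 (w.1.symm i) <;> simp

theorem sgnPart_mono {n : ℕ} (w : Equiv.Perm (Fin n) × (Fin n → Bool)) (b : Bool) {i j : Fin n}
    (h : i ≤ j) : sgnPart w b i ⊆ sgnPart w b j := by
  intro c hc
  simp only [sgnPart, mem_filter, mem_univ, true_and] at hc ⊢
  exact ⟨hc.1.trans h, hc.2⟩

theorem GoodLab.compat {n : ℕ} {lab : Finset (Fin n) → Finset (Fin n) → ℕ} (hl : GoodLab lab)
    (w : Equiv.Perm (Fin n) × (Fin n → Bool)) (T : Finset (Fin n)) :
    ∀ x ∈ T.val.map (labAt lab w), ∀ y ∈ T.val.map (labAt lab w), x / 2 = y / 2 → x = y := by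
  intro x hx y hy hxy
  rw [Multiset.mem_map] at hx hy
  obtain ⟨i, -, rfl⟩ := hx
  obtain ⟨j, -, rfl⟩ := hy
  rcases le_total i j with h | h
  · exact hl.comp _ _ _ _ (sgnPart_mono w _ h) (sgnPart_mono w _ h) (sgnPart_disj w j)
      (sgnPart_nonempty w i) hxy
  · exact (hl.comp _ _ _ _ (sgnPart_mono w _ h) (sgnPart_mono w _ h) (sgnPart_disj w i)
      (sgnPart_nonempty w j) hxy.symm).symm

def fanSum {n : ℕ} (lab : Finset (Fin n) → Finset (Fin n) → ℕ) (d : ℕ) : ZMod 2 :=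
  ∑ w ∈ facets n d, altInd true ((lowPos n d).val.map (labAt lab w)).sort

theorem fanSum_zero {n : ℕ} (lab : Finset (Fin n) → Finset (Fin n) → ℕ) : fanSum lab 0 = 1 := by
  have h1 : facets n 0 = {(1, fun _ => true)} := by
    ext ⟨σ, s⟩
    simp only [facets, mem_filter, mem_univ, true_and, mem_singleton, Prod.mk.injEq]
    constructor
    · intro h
      exact ⟨Equiv.ext fun c => (h c (Nat.zero_le _)).1, funext fun c => (h c (Nat.zero_le _)).2⟩
    · rintro ⟨rfl, rfl⟩ c _
      simp
  have h2 : lowPos n 0 = ∅ := by ext; simp [lowPos]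
  simp [fanSum, h1, h2, altInd]

/-- Antipodal map at level `d`. -/
def antip (n d : ℕ) (w : Equiv.Perm (Fin n) × (Fin n → Bool)) :
    Equiv.Perm (Fin n) × (Fin n → Bool) :=
  (w.1, fun c => if c.val < d then !(w.2 c) else w.2 c)

theorem antip_antip (n d : ℕ) (w : Equiv.Perm (Fin n) × (Fin n → Bool)) :
    antip n d (antip n d w) = w := by
  ext c
  · rfl
  · simp only [antip]; split_ifs <;> simp

theorem antip_mem {n d : ℕ} {w : Equiv.Perm (Fin n) × (Fin n → Bool)} (hw : w ∈ facets n d) :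
    antip n d w ∈ facets n d := by
  simp only [facets, mem_filter, mem_univ, true_and, antip] at hw ⊢
  intro c hc
  rw [if_neg (by omega)]
  exact hw c hc

theorem facets_low {n d : ℕ} {w : Equiv.Perm (Fin n) × (Fin n → Bool)} (hw : w ∈ facets n d)
    (c : Fin n) (hc : (w.1 c).val < d) : c.val < d := by
  simp only [facets, mem_filter, mem_univ, true_and] at hw
  by_contra h
  have := (hw c (by omega)).1
  rw [this] at hc
  omega

theorem sgnPart_antip {n d : ℕ} {w : Equiv.Perm (Fin n) × (Fin n → Bool)} (hw : w ∈ facets n d)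
    (b : Bool) (i : Fin n) (hi : i.val < d) : sgnPart (antip n d w) b i = sgnPart w (!b) i := by
  ext c
  simp only [mem_sgnPart, antip]
  constructor
  · rintro ⟨h1, h2⟩
    have hc := facets_low hw c (lt_of_le_of_lt h1 hi)
    rw [if_pos hc] at h2
    exact ⟨h1, by rw [← h2]; simp⟩
  · rintro ⟨h1, h2⟩
    have hc := facets_low hw c (lt_of_le_of_lt h1 hi)
    rw [if_pos hc]
    exact ⟨h1, by rw [h2]; simp⟩

theorem altInd_antip {n d : ℕ} {lab : Finset (Fin n) → Finset (Fin n) → ℕ} (hl : GoodLab lab)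
    {w : Equiv.Perm (Fin n) × (Fin n → Bool)} (hw : w ∈ facets n d) (b : Bool) :
    altInd b ((lowPos n d).val.map (labAt lab (antip n d w))).sort
      = altInd (!b) ((lowPos n d).val.map (labAt lab w)).sort := by
  rw [← altInd_flip _ _ (hl.compat w _), Multiset.map_map]
  congr 2
  apply Multiset.map_congr rfl
  intro i hi
  have hi' : i.val < d := by simpa [lowPos] using hi
  simp only [labAt, Function.comp, sgnPart_antip hw _ i hi', Bool.not_true, Bool.not_false]
  exact hl.anti _ _ (sgnPart_disj w i) (sgnPart_nonempty w i)

/-- The upper hemisphere. -/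
def hemi (n : ℕ) (d : Fin n) (b : Bool) : Finset (Equiv.Perm (Fin n) × (Fin n → Bool)) :=
  (facets n (d.val + 1)).filter (fun w => w.2 d = b)

theorem swap_cancel {n : ℕ} (lab : Finset (Fin n) → Finset (Fin n) → ℕ) (d i : Fin n)
    (hi : i.val < d.val) :
    ∑ w ∈ hemi n d true,
      altInd true ((((lowPos n (d.val + 1)).erase i).val.map (labAt lab w)).sort) = 0 := by
  have hi1 : i.val + 1 < n := by have := d.isLt; omega
  set i' : Fin n := ⟨i.val + 1, hi1⟩ with hi'
  have hne : i ≠ i' := by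
    intro h; have := congrArg Fin.val h; simp [hi'] at this
  refine Finset.sum_involution (fun w _ => (Equiv.swap i i' * w.1, w.2)) ?_ ?_ ?_ ?_
  · intro w hw
    have : ((lowPos n (d.val + 1)).erase i).val.map (labAt lab (Equiv.swap i i' * w.1, w.2))
        = ((lowPos n (d.val + 1)).erase i).val.map (labAt lab w) := by
      apply Multiset.map_congr rfl
      intro j hj
      have hj' : j ≠ i := by
        rw [Finset.mem_val] at hj
        exact (Finset.mem_erase.1 hj).1
      have key : ∀ b, sgnPart (Equiv.swap i i' * w.1, w.2) b j = sgnPart w b j := by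
        intro b
        ext c
        simp only [mem_sgnPart, Equiv.Perm.mul_apply]
        have : Equiv.swap i i' (w.1 c) ≤ j ↔ w.1 c ≤ j := by
          have hj2 : j.val ≠ i.val := fun h => hj' (Fin.ext h)
          rw [Equiv.swap_apply_def]
          split_ifs with h1 h2
          · rw [h1, Fin.le_def, Fin.le_def]; simp only [hi']; omega
          · rw [h2, Fin.le_def, Fin.le_def]; simp only [hi']; omega
          · rfl
        rw [this]
      simp only [labAt, key]
    rw [this]
    exact zmod2_add_self _
  · intro w hw _ h
    have h1 := congrArg Prod.fst h
    simp only [mul_eq_right] at h1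
    exact hne (Equiv.swap_eq_one_iff.1 h1)
  · intro w hw
    simp only [hemi, facets, mem_filter, mem_univ, true_and] at hw ⊢
    refine ⟨fun c hc => ⟨?_, (hw.1 c hc).2⟩, hw.2⟩
    rw [Equiv.Perm.mul_apply, (hw.1 c hc).1, Equiv.swap_apply_of_ne_of_ne]
    · intro h; have := congrArg Fin.val h; omega
    · intro h; have := congrArg Fin.val h; simp [hi'] at this; omega
  · intro w hw
    simp [← mul_assoc]

theorem flip_cancel {n : ℕ} (lab : Finset (Fin n) → Finset (Fin n) → ℕ) (d : Fin n) :
    ∑ w ∈ (hemi n d true).filter (fun w => ¬ w.1 d = d),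
      altInd true (((lowPos n d.val).val.map (labAt lab w)).sort) = 0 := by
  refine Finset.sum_involution
    (fun w _ => (w.1, Function.update w.2 (w.1.symm d) (!(w.2 (w.1.symm d))))) ?_ ?_ ?_ ?_
  · intro w hw
    have : (lowPos n d.val).val.map (labAt lab
          (w.1, Function.update w.2 (w.1.symm d) (!(w.2 (w.1.symm d)))))
        = (lowPos n d.val).val.map (labAt lab w) := by
      apply Multiset.map_congr rfl
      intro j hj
      have hj' : j.val < d.val := by simpa [lowPos] using hj
      have key : ∀ b, sgnPart (w.1, Function.update w.2 (w.1.symm d) (!(w.2 (w.1.symm d)))) b j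
          = sgnPart w b j := by
        intro b
        ext c
        simp only [mem_sgnPart]
        apply and_congr_right
        intro hc
        rw [Function.update_of_ne]
        rintro rfl
        rw [Equiv.apply_symm_apply, Fin.le_def] at hc
        omega
      simp only [labAt, key]
    rw [this]
    exact zmod2_add_self _
  · intro w hw _ h
    have h1 := congrFun (congrArg Prod.snd h) (w.1.symm d)
    simp at h1
  · intro w hw
    simp only [hemi, facets, mem_filter, mem_univ, true_and] at hw ⊢
    obtain ⟨⟨h1, h2⟩, h3⟩ := hw
    refine ⟨⟨fun c hc => ⟨(h1 c hc).1, ?_⟩, ?_⟩, h3⟩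
    · rw [Function.update_of_ne]
      · exact (h1 c hc).2
      · rintro rfl
        have := (h1 _ hc).1
        rw [Equiv.apply_symm_apply] at this
        rw [← this] at hc
        omega
    · rw [Function.update_of_ne]
      · exact h2
      · intro h
        apply h3
        conv_lhs => rw [h]
        simp
  · intro w hw
    simp

theorem fanSum_succ {n : ℕ} {lab : Finset (Fin n) → Finset (Fin n) → ℕ} (hl : GoodLab lab)
    (d : Fin n) : fanSum lab (d.val + 1) = fanSum lab d.val := by
  have hd : d ∈ lowPos n (d.val + 1) := by simp [lowPos]
  have he : (lowPos n (d.val + 1)).erase d = lowPos n d.val := by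
    ext j
    simp only [lowPos, mem_erase, mem_filter, mem_univ, true_and, ne_eq, Fin.ext_iff]
    omega
  -- double counting
  have h1 : ∑ w ∈ hemi n d true, ∑ i ∈ lowPos n (d.val + 1),
      altInd true ((((lowPos n (d.val + 1)).erase i).val.map (labAt lab w)).sort)
      = fanSum lab d.val := by
    rw [Finset.sum_comm, ← Finset.add_sum_erase _ _ hd, he]
    rw [Finset.sum_eq_zero (s := lowPos n d.val), add_zero]
    · rw [← Finset.sum_filter_add_sum_filter_not _ (fun w => w.1 d = d), flip_cancel, add_zero]
      unfold fanSum
      congr 1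
      ext w
      simp only [hemi, facets, mem_filter, mem_univ, true_and]
      constructor
      · rintro ⟨⟨h1, h2⟩, h3⟩ c hc
        by_cases hcd : c = d
        · subst hcd; exact ⟨h3, h2⟩
        · exact h1 c (by have : c.val ≠ d.val := fun h => hcd (Fin.ext h)
                         omega)
      · intro h
        exact ⟨⟨fun c hc => h c (by omega), (h d le_rfl).2⟩, (h d le_rfl).1⟩
    · intro i hi
      exact swap_cancel lab d i (by simpa [lowPos] using hi)
  have h2 : ∑ w ∈ hemi n d true, ∑ i ∈ lowPos n (d.val + 1),
      altInd true ((((lowPos n (d.val + 1)).erase i).val.map (labAt lab w)).sort)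
      = fanSum lab (d.val + 1) := by
    simp only [altInd_finset]
    rw [Finset.sum_add_distrib]
    unfold fanSum
    rw [← Finset.sum_filter_add_sum_filter_not (facets n (d.val + 1)) (fun w => w.2 d = true)]
    congr 1
    refine Finset.sum_nbij' (antip n (d.val + 1)) (antip n (d.val + 1)) ?_ ?_ ?_ ?_ ?_
    · intro w hw
      simp only [hemi, mem_filter] at hw ⊢
      refine ⟨antip_mem hw.1, ?_⟩
      simp [antip, hw.2]
    · intro w hw
      simp only [hemi, mem_filter] at hw ⊢
      refine ⟨antip_mem hw.1, ?_⟩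
      simpa [antip] using hw.2
    · intro w _; exact antip_antip _ _ w
    · intro w _; exact antip_antip _ _ w
    · intro w hw
      rw [altInd_antip hl (mem_filter.1 hw).1]
  rw [← h1, h2]

/-- Octahedral Tucker lemma. -/
theorem tucker {n m : ℕ} {lab : Finset (Fin n) → Finset (Fin n) → ℕ} (hl : GoodLab lab)
    (hb : ∀ P Q, Disjoint P Q → (P ∪ Q).Nonempty → lab P Q < 2 * m) : n ≤ m := by
  have h : ∀ d, d ≤ n → fanSum lab d = 1 := by
    intro d
    induction d with
    | zero => intro _; exact fanSum_zero lab
    | succ d ih =>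
      intro hd
      have := fanSum_succ hl ⟨d, hd⟩
      simp only at this
      rw [this, ih (by omega)]
  have hn := h n le_rfl
  have : ∃ w ∈ facets n n, altInd true ((lowPos n n).val.map (labAt lab w)).sort ≠ 0 := by
    apply Finset.exists_ne_zero_of_sum_ne_zero
    unfold fanSum at hn
    rw [hn]
    decide
  obtain ⟨w, _, hw⟩ := this
  have := altInd_bound _ true m hw (hl.compat w _) (by
    intro x hx
    rw [Multiset.mem_map] at hx
    obtain ⟨i, _, rfl⟩ := hx
    exact hb _ _ (sgnPart_disj w i) (sgnPart_nonempty w i))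
  simpa [lowPos] using this

/-- One plus the maximal colour of a `k`-subset of `P`, or zero if there is none. -/
def maxCol {n : ℕ} (c : Finset (Fin n) → ℕ) (k : ℕ) (P : Finset (Fin n)) : ℕ :=
  (P.powersetCard k).sup (fun F => c F + 1)

theorem maxCol_mono {n : ℕ} (c : Finset (Fin n) → ℕ) (k : ℕ) {P P' : Finset (Fin n)}
    (h : P ⊆ P') : maxCol c k P ≤ maxCol c k P' :=
  Finset.sup_mono (Finset.powersetCard_mono h)

theorem maxCol_pos {n : ℕ} (c : Finset (Fin n) → ℕ) (k : ℕ) {P : Finset (Fin n)}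
    (h : k ≤ P.card) : 0 < maxCol c k P := by
  obtain ⟨F, hF, hc⟩ := Finset.exists_subset_card_eq h
  have : c F + 1 ≤ maxCol c k P :=
    Finset.le_sup (f := fun F => c F + 1) (Finset.mem_powersetCard.2 ⟨hF, hc⟩)
  omega

theorem maxCol_exists {n : ℕ} (c : Finset (Fin n) → ℕ) (k : ℕ) {P : Finset (Fin n)}
    (h : 0 < maxCol c k P) : ∃ F ⊆ P, F.card = k ∧ maxCol c k P = c F + 1 := by
  have hne : (P.powersetCard k).Nonempty := by
    by_contra hc
    rw [Finset.not_nonempty_iff_eq_empty] at hc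
    simp [maxCol, hc] at h
  obtain ⟨F, hF, he⟩ := Finset.exists_mem_eq_sup _ hne (fun F => c F + 1)
  rw [Finset.mem_powersetCard] at hF
  exact ⟨F, hF.1, hF.2, he⟩

theorem maxCol_tie {n : ℕ} {c : Finset (Fin n) → ℕ} {k : ℕ}
    (hc : ∀ F F' : Finset (Fin n), F.card = k → F'.card = k → Disjoint F F' → c F ≠ c F')
    {P Q : Finset (Fin n)} (hd : Disjoint P Q) (h : maxCol c k P = maxCol c k Q) :
    maxCol c k P = 0 := by
  by_contra h0
  obtain ⟨F, hF, hk, he⟩ := maxCol_exists c k (Nat.pos_of_ne_zero h0)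
  obtain ⟨F', hF', hk', he'⟩ := maxCol_exists c k (h ▸ Nat.pos_of_ne_zero h0)
  exact hc F F' hk hk' (Finset.disjoint_of_subset_left hF (Finset.disjoint_of_subset_right hF' hd))
    (by omega)

open Classical in
/-- Matousek's labelling. -/
noncomputable def kneserLab {n : ℕ} (c : Finset (Fin n) → ℕ) (k : ℕ) (P Q : Finset (Fin n)) : ℕ :=
  if P.card + Q.card ≤ 2 * k - 2 then
    2 * (P.card + Q.card - 1) + (if ∃ x ∈ P, ∀ y ∈ Q, x < y then 0 else 1)
  else
    2 * (2 * k - 2 + (max (maxCol c k P) (maxCol c k Q) - 1)) +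
      (if maxCol c k Q < maxCol c k P then 0 else 1)

theorem min_dichotomy {n : ℕ} {P Q : Finset (Fin n)} (hd : Disjoint P Q)
    (hne : (P ∪ Q).Nonempty) :
    (∃ x ∈ Q, ∀ y ∈ P, x < y) ↔ ¬ (∃ x ∈ P, ∀ y ∈ Q, x < y) := by
  constructor
  · rintro ⟨x, hx, h⟩ ⟨y, hy, h'⟩
    exact lt_asymm (h y hy) (h' x hx)
  · intro h
    set z := (P ∪ Q).min' hne with hz
    have hzm : z ∈ P ∪ Q := Finset.min'_mem _ _
    have hle : ∀ y ∈ P ∪ Q, z ≤ y := fun y hy => Finset.min'_le _ _ hy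
    rcases Finset.mem_union.1 hzm with h1 | h1
    · exfalso
      refine h ⟨z, h1, fun y hy => lt_of_le_of_ne (hle y (Finset.mem_union_right _ hy)) ?_⟩
      intro he
      exact Finset.disjoint_left.1 hd h1 (he ▸ hy)
    · refine ⟨z, h1, fun y hy => lt_of_le_of_ne (hle y (Finset.mem_union_left _ hy)) ?_⟩
      intro he
      exact Finset.disjoint_left.1 hd hy (he ▸ h1)

theorem big_pos {n : ℕ} (c : Finset (Fin n) → ℕ) (k : ℕ) {P Q : Finset (Fin n)}
    (h : ¬ P.card + Q.card ≤ 2 * k - 2) : 0 < max (maxCol c k P) (maxCol c k Q) := by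
  rcases le_or_gt k P.card with h1 | h1
  · exact lt_max_of_lt_left (maxCol_pos c k h1)
  · exact lt_max_of_lt_right (maxCol_pos c k (by omega))

theorem kneserLab_good {n : ℕ} {c : Finset (Fin n) → ℕ} {k : ℕ}
    (hc : ∀ F F' : Finset (Fin n), F.card = k → F'.card = k → Disjoint F F' → c F ≠ c F') :
    GoodLab (kneserLab c k) := by
  constructor
  · intro P Q hd hne
    unfold kneserLab
    by_cases hs : P.card + Q.card ≤ 2 * k - 2
    · rw [if_pos hs, if_pos (by omega), add_comm Q.card]
      have := min_dichotomy hd hne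
      unfold flipLab
      by_cases h : ∃ x ∈ P, ∀ y ∈ Q, x < y
      · rw [if_neg (by rw [this]; exact not_not.2 h), if_pos h]; omega
      · rw [if_pos (this.2 h), if_neg h]; omega
    · rw [if_neg hs, if_neg (by omega), max_comm (maxCol c k Q)]
      have h0 := big_pos c k hs
      have ht : maxCol c k P ≠ maxCol c k Q := by
        intro h
        have := maxCol_tie hc hd h
        rw [← h, this] at h0
        simp at h0
      unfold flipLab
      split_ifs <;> omega
  · intro P Q P' Q' hP hQ hd hne hj
    have hcP := Finset.card_le_card hP
    have hcQ := Finset.card_le_card hQ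
    have hpos : 0 < P.card + Q.card :=
      lt_of_lt_of_le (Finset.card_pos.2 hne) (Finset.card_union_le _ _)
    by_cases hs' : P'.card + Q'.card ≤ 2 * k - 2
    · have hs : P.card + Q.card ≤ 2 * k - 2 := by omega
      have h1 : P.card + Q.card = P'.card + Q'.card := by
        unfold kneserLab at hj
        rw [if_pos hs, if_pos hs'] at hj
        split_ifs at hj <;> omega
      rw [Finset.eq_of_subset_of_card_le hP (by omega), Finset.eq_of_subset_of_card_le hQ (by omega)]
    · by_cases hs : P.card + Q.card ≤ 2 * k - 2
      · exfalso
        unfold kneserLab at hj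
        rw [if_pos hs, if_neg hs'] at hj
        split_ifs at hj <;> omega
      · have h0 := big_pos c k hs
        have h0' := big_pos c k hs'
        have hd0 : Disjoint P Q :=
          Finset.disjoint_of_subset_left hP (Finset.disjoint_of_subset_right hQ hd)
        have hmP := maxCol_mono c k hP
        have hmQ := maxCol_mono c k hQ
        have ht : maxCol c k P' ≠ maxCol c k Q' := by
          intro h
          have := maxCol_tie hc hd h
          rw [← h, this] at h0'
          simp at h0'
        have ht0 : maxCol c k P ≠ maxCol c k Q := by
          intro h
          have := maxCol_tie hc hd0 h
          rw [← h, this] at h0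
          simp at h0
        unfold kneserLab at hj ⊢
        rw [if_neg hs, if_neg hs'] at hj ⊢
        generalize maxCol c k P = p at *
        generalize maxCol c k Q = q at *
        generalize maxCol c k P' = p' at *
        generalize maxCol c k Q' = q' at *
        split_ifs at hj ⊢ <;> omega

/-- The Lovasz-Kneser theorem. -/
theorem kneser {n k m : ℕ} (hk : 1 ≤ k) (c : Finset (Fin n) → ℕ)
    (hm : ∀ F : Finset (Fin n), F.card = k → c F < m) (hn : 2 * k - 1 + m ≤ n) :
    ∃ F F' : Finset (Fin n), F.card = k ∧ F'.card = k ∧ Disjoint F F' ∧ c F = c F' := by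
  by_contra hcon
  push Not at hcon
  have hg := kneserLab_good hcon
  have hle : ∀ P, maxCol c k P ≤ m := by
    intro P
    apply Finset.sup_le
    intro F hF
    exact hm F (Finset.mem_powersetCard.1 hF).2
  have := tucker (m := 2 * k - 2 + m) hg (by
    intro P Q hd hne
    have hpos : 0 < P.card + Q.card :=
      lt_of_lt_of_le (Finset.card_pos.2 hne) (Finset.card_union_le _ _)
    have h1 := hle P
    have h2 := hle Q
    have h0 := big_pos c k (P := P) (Q := Q)
    unfold kneserLab
    split_ifs <;> omega)
  omega

theorem distMultiset_card {V : Type*} (G : SimpleGraph V) (S : Finset V) :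
    (distMultiset G S).card = S.card.choose 2 := by
  classical
  unfold distMultiset
  rw [Multiset.card_map, Finset.card_val]
  have h := Sym2.card_image_offDiag S
  rw [← h]
  apply congrArg
  ext p
  induction p with
  | _ a b =>
    simp only [mem_filter, Finset.mk_mem_sym2_iff, Sym2.isDiag_iff_proj_eq, mem_image, mem_offDiag,
      Prod.exists, Function.uncurry]
    constructor
    · rintro ⟨⟨h1, h2⟩, h3⟩
      exact ⟨a, b, ⟨h1, h2, h3⟩, rfl⟩
    · rintro ⟨x, y, ⟨h1, h2, h3⟩, h4⟩
      rcases Sym2.eq_iff.1 h4 with ⟨rfl, rfl⟩ | ⟨rfl, rfl⟩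
      · exact ⟨⟨h1, h2⟩, h3⟩
      · exact ⟨⟨h2, h1⟩, fun h => h3 h.symm⟩

theorem distMultiset_mem {V : Type*} (G : SimpleGraph V) (S : Finset V) (v : V)
    (hS : ∀ x ∈ S, x = v ∨ G.Adj v x) : ∀ t ∈ distMultiset G S, t = 1 ∨ t = 2 := by
  classical
  intro t ht
  unfold distMultiset at ht
  rw [Multiset.mem_map] at ht
  obtain ⟨p, hp, rfl⟩ := ht
  rw [Finset.mem_val, mem_filter] at hp
  obtain ⟨h1, h2⟩ := hp
  induction p with
  | _ a b =>
    rw [Finset.mk_mem_sym2_iff] at h1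
    have hab : a ≠ b := by simpa using h2
    show G.dist a b = 1 ∨ G.dist a b = 2
    have key : ∃ w : G.Walk a b, w.length ≤ 2 := by
      rcases hS a h1.1 with rfl | ha <;> rcases hS b h1.2 with rfl | hb
      · exact absurd rfl hab
      · exact ⟨hb.toWalk, by simp⟩
      · exact ⟨ha.symm.toWalk, by simp⟩
      · exact ⟨SimpleGraph.Walk.cons ha.symm hb.toWalk, by simp⟩
    obtain ⟨w, hw⟩ := key
    have h3 := SimpleGraph.dist_le w
    have h4 : 0 < G.dist a b := w.reachable.pos_dist_of_ne hab
    omega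

theorem eq_of_count_one {M N : Multiset ℕ} (hM : ∀ t ∈ M, t = 1 ∨ t = 2)
    (hN : ∀ t ∈ N, t = 1 ∨ t = 2) (hc : M.card = N.card) (h1 : M.count 1 = N.count 1) :
    M = N := by
  have key : ∀ M : Multiset ℕ, (∀ t ∈ M, t = 1 ∨ t = 2) →
      M = Multiset.replicate (M.count 1) 1 + Multiset.replicate (M.card - M.count 1) 2 := by
    intro M hM
    have h2 := Multiset.filter_add_not (fun t => t = 1) M
    rw [Multiset.filter_eq'] at h2
    have h3 : Multiset.filter (fun t => ¬ t = 1) M = Multiset.replicate (M.card - M.count 1) 2 := by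
      rw [Multiset.eq_replicate]
      constructor
      · have := congrArg Multiset.card h2
        rw [Multiset.card_add, Multiset.card_replicate] at this
        omega
      · intro b hb
        rw [Multiset.mem_filter] at hb
        exact (hM b hb.1).resolve_left hb.2
    rw [h3] at h2
    exact h2.symm
  rw [key M hM, key N hN, hc, h1]

theorem sqrt_maxDegree_le {V : Type*} [Fintype V] [DecidableEq V] (G : SimpleGraph V)
    [DecidableRel G.Adj] (hΔ : 1 ≤ G.maxDegree) :
    Nat.sqrt G.maxDegree ≤ homNumber G := by
  have : Nonempty V := by
    by_contra h
    rw [not_nonempty_iff] at h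
    rw [SimpleGraph.maxDegree_of_subsingleton] at hΔ
    omega
  obtain ⟨v, hv⟩ := G.exists_maximal_degree_vertex
  set k := Nat.sqrt G.maxDegree with hkdef
  have hk : 1 ≤ k := Nat.sqrt_pos.2 hΔ
  have hk2 : k * k ≤ G.maxDegree := Nat.sqrt_le _
  set T : Finset V := insert v (G.neighborFinset v) with hT
  have hTc : T.card = G.maxDegree + 1 := by
    rw [hT, Finset.card_insert_of_notMem (by simp), SimpleGraph.card_neighborFinset_eq_degree, hv]
  let e : Fin T.card ↪ V := T.equivFin.symm.toEmbedding.trans (Function.Embedding.subtype _)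
  have heT : ∀ F : Finset (Fin T.card), ∀ x ∈ F.map e, x = v ∨ G.Adj v x := by
    intro F x hx
    rw [Finset.mem_map] at hx
    obtain ⟨i, _, rfl⟩ := hx
    have : e i ∈ T := (T.equivFin.symm i).2
    simpa [hT] using this
  obtain ⟨F, F', hF, hF', hd, hc⟩ := kneser (n := T.card) (k := k) (m := k.choose 2 + 1) hk
    (fun F => (distMultiset G (F.map e)).count 1)
    (by
      intro F hF
      have h1 := Multiset.count_le_card 1 (distMultiset G (F.map e))
      rw [distMultiset_card, Finset.card_map, hF] at h1
      exact Nat.lt_succ_of_le h1)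
    (by
      rw [hTc, Nat.choose_two_right]
      have h1 : k * (k - 1) = k * k - k := by rw [Nat.mul_sub, Nat.mul_one]
      rw [h1]
      have h2 : 3 * k ≤ k * k + 3 := by
        rcases Nat.lt_or_ge k 3 with h | h
        · interval_cases k <;> omega
        · nlinarith
      omega)
  apply le_csSup
  · refine ⟨Fintype.card V, ?_⟩
    rintro h ⟨S₁, S₂, _, rfl, _⟩
    exact Finset.card_le_univ S₁
  · refine ⟨F.map e, F'.map e, ⟨(Finset.disjoint_map e).2 hd, ?_⟩, by simp [hF], by simp [hF']⟩
    refine eq_of_count_one (distMultiset_mem G _ v (heT F)) (distMultiset_mem G _ v (heT F')) ?_ hc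
    rw [distMultiset_card, distMultiset_card]
    simp [hF, hF']

theorem stmt3 {V : Type*} [Fintype V] [DecidableEq V] (G : SimpleGraph V)
    [DecidableRel G.Adj] (hG : G.Connected) (hΔ : 1 ≤ G.maxDegree) :
    Nat.sqrt G.maxDegree ≤ homNumber G ∧
      ⌊Real.sqrt ((2 * (G.edgeFinset.card : ℝ)) / (Fintype.card V : ℝ))⌋₊ ≤ homNumber G := by
  have h1 := sqrt_maxDegree_le G hΔ
  refine ⟨h1, le_trans ?_ h1⟩
  rw [← Real.nat_floor_real_sqrt_eq_nat_sqrt]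
  apply Nat.floor_le_floor
  apply Real.sqrt_le_sqrt
  have hn : 0 < Fintype.card V := Fintype.card_pos_iff.2 hG.nonempty
  rw [div_le_iff₀ (by exact_mod_cast hn)]
  have h2 : 2 * G.edgeFinset.card ≤ G.maxDegree * Fintype.card V := by
    rw [← G.sum_degrees_eq_twice_card_edges]
    have := Finset.sum_le_card_nsmul (univ : Finset V) (fun v => G.degree v) G.maxDegree
      (fun v _ => G.degree_le_maxDegree v)
    rw [smul_eq_mul, Finset.card_univ] at this
    rw [mul_comm]; exact this
  exact_mod_cast h2
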